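/- There exists an AAPA whose language is recognized by no NAPA: there are a finite alphabet Σ and an AAPA A over Σ with two directions such that L(B) ≠ L(A) for every NAPA B over Σ with two directions. -/

import Mathlib

/-! ### Positive Boolean formulas -/

/-- Positive Boolean formulas over a set of atoms `Q`, built from atoms,
conjunction, disjunction and the constants true and false. -/
inductive PosBool (Q : Type u) : Type u
  | tt : PosBool Q
  | ff : PosBool Q
  | var : Q → PosBool Q
  | and : PosBool Q → PosBool Q → PosBool Q
  | or : PosBool Q → PosBool Q → PosBool Q

namespace PosBool

/-- `Sat C f` holds iff the valuation making exactly the elements of `C` true satisfies `f`. -/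
def Sat {Q : Type u} (C : Set Q) : PosBool Q → Prop
  | tt => True
  | ff => False
  | var q => q ∈ C
  | and f g => Sat C f ∧ Sat C g
  | or f g => Sat C f ∨ Sat C g

/-- A positive Boolean formula that is a disjunction of atoms. -/
inductive IsDisj {Q : Type u} : PosBool Q → Prop
  | ff : IsDisj ff
  | var (q : Q) : IsDisj (var q)
  | or {f g : PosBool Q} : IsDisj f → IsDisj g → IsDisj (f.or g)

/-- Syntactic size of a positive Boolean formula. -/
def size {Q : Type u} : PosBool Q → ℕ
  | tt => 1
  | ff => 1
  | var _ => 1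
  | and f g => size f + size g + 1
  | or f g => size f + size g + 1

end PosBool

/-! ### Alternating Asynchronous Parity Automata -/

/-- An Alternating Asynchronous Parity Automaton (AAPA) over the alphabet `σ`
with state set `Q` and `n` directions. -/
structure AAPA (σ : Type u) (Q : Type v) (n : ℕ) where
  init : PosBool Q
  trans : Q → σ → Fin n → PosBool Q
  prio : Q → ℕ

namespace AAPA

variable {σ : Type u} {Q : Type v} {n : ℕ}

/-- A run of an AAPA `A` on the tuple of `ω`-words `w`: a tree of nodes
(coded as lists of natural numbers, the root being `[]`), whose non-root nodes
are labeled with states and which carry offset counters, subject to the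
local consistency conditions of AAPA runs. -/
structure Run (A : AAPA σ Q n) (w : Fin n → ℕ → σ) where
  tree : Set (List ℕ)
  label : List ℕ → Q
  cnt : List ℕ → Fin n → ℕ
  root_mem : [] ∈ tree
  prefix_closed : ∀ (t : List ℕ) (m : ℕ), t ++ [m] ∈ tree → t ∈ tree
  has_child : ∀ t ∈ tree, ∃ m : ℕ, t ++ [m] ∈ tree
  cnt_init : ∀ t ∈ tree, t.length ≤ 1 → cnt t = 0
  init_sat : PosBool.Sat {q | ∃ m : ℕ, [m] ∈ tree ∧ label [m] = q} A.init
  step : ∀ t ∈ tree, t ≠ [] → ∃ d : Fin n,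
    (∀ m : ℕ, t ++ [m] ∈ tree →
      cnt (t ++ [m]) = Function.update (cnt t) d (cnt t d + 1)) ∧
    PosBool.Sat {q | ∃ m : ℕ, t ++ [m] ∈ tree ∧ label (t ++ [m]) = q}
      (A.trans (label t) (w d (cnt t d)) d)

variable {A : AAPA σ Q n} {w : Fin n → ℕ → σ}

/-- An infinite path through a run, starting at the root. -/
def Run.IsPath (r : A.Run w) (p : ℕ → List ℕ) : Prop :=
  p 0 = [] ∧ ∀ i : ℕ, (∃ m : ℕ, p (i + 1) = p i ++ [m]) ∧ p (i + 1) ∈ r.tree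

/-- A run is accepting iff on every infinite path the least priority occurring
infinitely often is even. -/
def Run.Accepting (r : A.Run w) : Prop :=
  ∀ p : ℕ → List ℕ, r.IsPath p →
    Even (sInf {c : ℕ | ∀ N : ℕ, ∃ i : ℕ, N ≤ i ∧ A.prio (r.label (p i)) = c})

/-- The language of an AAPA: the set of tuples of `ω`-words on which it has an
accepting run. -/
def lang (A : AAPA σ Q n) : Set (Fin n → ℕ → σ) :=
  {w | ∃ r : A.Run w, r.Accepting}

/-- A Nondeterministic Asynchronous Parity Automaton (NAPA) is an AAPA whose
initial condition and transitions are disjunctions of states. -/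
def IsNondet (A : AAPA σ Q n) : Prop :=
  A.init.IsDisj ∧ ∀ (q : Q) (a : σ) (d : Fin n), (A.trans q a d).IsDisj

end AAPA

/-!
Let `L` consist of the pairs `(u, v)` such that `u = v` and such that, if `v` contains a `1`, then
deleting its first block `0ᵏ1` leaves `u`. An alternating automaton checks the two conditions in
two separate branches. The pairs `(u, u)` with `u = (0ⁿ1)^ω` lie in `L`. On such a pair, an
automaton with `n` states which follows a single branch repeats a state within its first `n` steps,
while it has read nothing but zeros. Running through that loop twice, it also accepts a pair in
which the first block of at least one of the words is longer, and this pair is not in `L`.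
-/

/-! ### Sequences -/

theorem exists_seq_of_forall_exists {α : Type*} {P : α → Prop} {R : α → α → Prop} {a : α}
    (ha : P a) (h : ∀ x, P x → ∃ y, P y ∧ R x y) :
    ∃ f : ℕ → α, f 0 = a ∧ ∀ k, P (f k) ∧ R (f k) (f (k + 1)) := by
  choose! g hP hR using h
  have hf : ∀ k, P (g^[k] a) := fun k => by
    induction k with
    | zero => exact ha
    | succ k ih => simpa only [Function.iterate_succ_apply'] using hP _ ih
  refine ⟨fun k => g^[k] a, rfl, fun k => ⟨hf k, ?_⟩⟩
  simpa only [Function.iterate_succ_apply'] using hR _ (hf k)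

theorem exists_lt_le_card_map_eq {α : Type*} [Finite α] (f : ℕ → α) :
    ∃ s t, s < t ∧ t ≤ Nat.card α ∧ f s = f t := by
  have := Fintype.ofFinite α
  obtain ⟨a, b, hab, h⟩ := Fintype.exists_ne_map_eq_of_card_lt
    (fun i : Fin (Nat.card α + 1) => f i) (by simp)
  rcases lt_or_gt_of_ne hab with hlt | hlt
  · exact ⟨a, b, hlt, by lia, h⟩
  · exact ⟨b, a, hlt, by lia, h.symm⟩

/-- The sequence `u` with its segment from position `a` up to (but excluding) position `b`
repeated once; it is `u` itself if `b ≤ a`, as then the truncated difference `b - a` is `0`. -/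
def repeatSegment {α : Type*} (u : ℕ → α) (a b m : ℕ) : α :=
  if m < b then u m else u (m - (b - a))

section RepeatSegment

variable {α : Type*} {u : ℕ → α} {a b m : ℕ}

theorem repeatSegment_of_lt (h : m < b) : repeatSegment u a b m = u m :=
  if_pos h

theorem repeatSegment_add (h : a ≤ m) : repeatSegment u a b (m + (b - a)) = u m := by
  rw [repeatSegment, if_neg (by lia), Nat.add_sub_cancel]

theorem repeatSegment_of_le (hab : a ≤ b) (hu : u a = u b) (h : m ≤ b) :
    repeatSegment u a b m = u m := by
  rcases h.lt_or_eq with h | rfl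
  · exact repeatSegment_of_lt h
  · have h := repeatSegment_add (u := u) (b := m) (le_refl a)
    rwa [Nat.add_sub_of_le hab, hu] at h

theorem apply_repeatSegment {β : Type*} (f : α → β) (u : ℕ → α) (a b m : ℕ) :
    f (repeatSegment u a b m) = repeatSegment (fun i => f (u i)) a b m :=
  apply_ite f _ _ _

end RepeatSegment

/-- The parity condition on a sequence of priorities: the least one occurring infinitely often is
even. It also holds if there is none, since then the infimum is `0`. -/
def ParityCondition (p : ℕ → ℕ) : Prop :=
  Even (sInf {c | ∀ N, ∃ i, N ≤ i ∧ p i = c})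

theorem parityCondition_of_forall_even {p : ℕ → ℕ} (h : ∀ i, Even (p i)) :
    ParityCondition p := by
  rcases Set.eq_empty_or_nonempty {c | ∀ N, ∃ i, N ≤ i ∧ p i = c} with hs | hs
  · simp only [ParityCondition, hs, Nat.sInf_empty, Even.zero]
  · obtain ⟨i, -, hi⟩ := Nat.sInf_mem hs 0
    exact (congrArg Even hi).mp (h i)

theorem parityCondition_add (p : ℕ → ℕ) (k : ℕ) :
    ParityCondition (fun i => p (i + k)) ↔ ParityCondition p := by
  have h : ∀ c, (∃ᶠ i in Filter.atTop, p (i + k) = c) ↔ ∃ᶠ i in Filter.atTop, p i = c :=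
    fun c => by conv_rhs => rw [← Filter.map_add_atTop_eq_nat k, Filter.frequently_map]
  simp only [Filter.frequently_atTop] at h
  simp only [ParityCondition, h]

theorem parityCondition_repeatSegment (p : ℕ → ℕ) (a b : ℕ) :
    ParityCondition (repeatSegment p a b) ↔ ParityCondition p := by
  have h : ∀ i, repeatSegment p a b (i + (a + (b - a))) = p (i + a) := fun i => by
    rw [← add_assoc, repeatSegment_add (Nat.le_add_left a i)]
  rw [← parityCondition_add _ (a + (b - a))]
  simp only [h, parityCondition_add p a]

namespace PosBool

theorem Sat.mono {Q : Type*} {C D : Set Q} {f : PosBool Q} (hf : f.Sat C) (h : C ⊆ D) :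
    f.Sat D := by
  induction f with
  | tt => trivial
  | ff => exact hf
  | var q => exact h hf
  | and f g ihf ihg => exact ⟨ihf hf.1, ihg hf.2⟩
  | or f g ihf ihg => exact hf.imp ihf ihg

theorem IsDisj.exists_sat_singleton {Q : Type*} {C : Set Q} {f : PosBool Q} (hd : f.IsDisj)
    (hf : f.Sat C) : ∃ q ∈ C, f.Sat {q} := by
  induction hd with
  | ff => exact hf.elim
  | var q => exact ⟨q, hf, rfl⟩
  | or _ _ ihf ihg =>
    rcases hf with hf | hf
    · exact (ihf hf).imp fun _ => And.imp_right Or.inl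
    · exact (ihg hf).imp fun _ => And.imp_right Or.inr

end PosBool

/-! ### Runs and branches -/

theorem update_add_one_eq_add_single {ι : Type*} [DecidableEq ι] (c : ι → ℕ) (d : ι) :
    Function.update c d (c d + 1) = c + Pi.single d 1 := by
  ext e
  rcases eq_or_ne e d with rfl | he
  · simp
  · simp [he]

namespace AAPA

variable {σ Q : Type*} {n : ℕ} {A : AAPA σ Q n} {w : Fin n → ℕ → σ}

/-- Some node of the run `r` below the root has state `q` and counters `c`. This forgets where in
the tree the node lies. -/
def Run.Visits (r : A.Run w) (q : Q) (c : Fin n → ℕ) : Prop :=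
  ∃ t ∈ r.tree, t ≠ [] ∧ r.label t = q ∧ r.cnt t = c

theorem Run.sat_init_visits (r : A.Run w) : A.init.Sat {q | r.Visits q 0} := by
  refine r.init_sat.mono ?_
  rintro q ⟨m, hm, hq⟩
  exact ⟨[m], hm, by simp, hq, r.cnt_init [m] hm le_rfl⟩

theorem Run.Visits.exists_sat {r : A.Run w} {q : Q} {c : Fin n → ℕ} (h : r.Visits q c) :
    ∃ d, (A.trans q (w d (c d)) d).Sat {q' | r.Visits q' (c + Pi.single d 1)} := by
  obtain ⟨t, ht, hne, rfl, rfl⟩ := h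
  obtain ⟨d, hc, hs⟩ := r.step t ht hne
  refine ⟨d, hs.mono ?_⟩
  rintro q' ⟨m, hm, hq'⟩
  exact ⟨t ++ [m], hm, by simp, hq', by rw [hc m hm, update_add_one_eq_add_single]⟩

theorem Run.IsPath.exists_eq_cons {r : A.Run w} {p : ℕ → List ℕ} (hp : r.IsPath p) :
    ∃ b, ∀ i, ∃ t, p (i + 1) = b :: t ∧ t.length = i := by
  obtain ⟨b, hb⟩ := (hp.2 0).1
  refine ⟨b, fun i => ?_⟩
  induction i with
  | zero => exact ⟨[], by simpa [hp.1] using hb, rfl⟩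
  | succ i ih =>
    obtain ⟨t, ht, hlen⟩ := ih
    obtain ⟨m, hm⟩ := (hp.2 (i + 1)).1
    exact ⟨t ++ [m], by simp [hm, ht], by simp [hlen]⟩

/-- A non-branching computation of `A` on `w`, with states `q` and counters `c`, which satisfies
the parity condition. It may start in any state. -/
structure IsAcceptingBranch (A : AAPA σ Q n) (w : Fin n → ℕ → σ) (q : ℕ → Q)
    (c : ℕ → Fin n → ℕ) : Prop where
  zero : c 0 = 0
  step : ∀ k, ∃ d, c (k + 1) = c k + Pi.single d 1 ∧
    (A.trans (q k) (w d (c k d)) d).Sat {q (k + 1)}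
  parity : ParityCondition fun k => A.prio (q k)

/-- The run has the full tree, all of whose nodes below a child `[b]` of the root follow
the `b`-th branch. -/
theorem mem_lang_of_isAcceptingBranch (q : ℕ → ℕ → Q) (c : ℕ → ℕ → Fin n → ℕ)
    (hinit : A.init.Sat (Set.range fun b => q b 0))
    (h : ∀ b, A.IsAcceptingBranch w (q b) (c b)) : w ∈ A.lang := by
  let r : A.Run w :=
    { tree := Set.univ
      label := fun t => q (t.headD 0) (t.length - 1)
      cnt := fun t => c (t.headD 0) (t.length - 1)
      root_mem := trivial
      prefix_closed := fun _ _ _ => trivial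
      has_child := fun _ _ => ⟨0, trivial⟩
      cnt_init := fun t _ ht => by simp only [Nat.sub_eq_zero_of_le ht, (h _).zero]
      init_sat := hinit.mono <| by rintro _ ⟨b, rfl⟩; exact ⟨b, trivial, rfl⟩
      step := by
        rintro (_ | ⟨b, t⟩) - hne
        · exact absurd rfl hne
        obtain ⟨d, hd, hs⟩ := (h b).step t.length
        refine ⟨d, fun m _ => ?_, hs.mono ?_⟩
        · simpa [update_add_one_eq_add_single] using hd
        · rintro _ rfl
          exact ⟨0, trivial, by simp⟩ }
  refine ⟨r, fun p hp => ?_⟩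
  obtain ⟨b, hpath⟩ := hp.exists_eq_cons
  have hlabel : ∀ i, r.label (p (i + 1)) = q b i := by
    intro i
    obtain ⟨t, ht, hlen⟩ := hpath i
    simp [r, ht, hlen]
  refine (parityCondition_add _ 1).1 ?_
  simpa only [hlabel] using (h b).parity

theorem mem_lang_of_forall_exists_isAcceptingBranch {S : Set Q} (hcount : S.Countable)
    (hne : S.Nonempty) (hinit : A.init.Sat S)
    (h : ∀ s ∈ S, ∃ q c, q 0 = s ∧ A.IsAcceptingBranch w q c) : w ∈ A.lang := by
  obtain ⟨f, rfl⟩ := hcount.exists_eq_range hne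
  choose q c h0 hbranch using fun b => h (f b) ⟨b, rfl⟩
  exact mem_lang_of_isAcceptingBranch q c (by simpa only [h0] using hinit) hbranch

theorem exists_isAcceptingBranch_of_invariant (hA : ∀ q, Even (A.prio q))
    {I : Q → (Fin n → ℕ) → Prop} {s : Q} (hs : I s 0)
    (hI : ∀ q c, I q c → ∃ d q',
      (A.trans q (w d (c d)) d).Sat {q'} ∧ I q' (c + Pi.single d 1)) :
    ∃ q c, q 0 = s ∧ A.IsAcceptingBranch w q c := by
  obtain ⟨f, hf0, hf⟩ := exists_seq_of_forall_exists (α := Q × (Fin n → ℕ)) (a := (s, 0))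
    (P := fun x => I x.1 x.2)
    (R := fun x y => ∃ d, y.2 = x.2 + Pi.single d 1 ∧
      (A.trans x.1 (w d (x.2 d)) d).Sat {y.1}) hs <| by
    rintro ⟨q, c⟩ hqc
    obtain ⟨d, q', hsat, hq'⟩ := hI q c hqc
    exact ⟨(q', _), hq', d, rfl, hsat⟩
  exact ⟨fun k => (f k).1, fun k => (f k).2, by simp only [hf0], by simp only [hf0],
    fun k => (hf k).2, parityCondition_of_forall_even fun _ => hA _⟩

theorem IsNondet.exists_isAcceptingBranch (hA : A.IsNondet) (hw : w ∈ A.lang) :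
    ∃ q c, A.init.Sat {q 0} ∧ A.IsAcceptingBranch w q c := by
  obtain ⟨r, hr⟩ := hw
  obtain ⟨_, ⟨m, hm, rfl⟩, hinit⟩ := hA.1.exists_sat_singleton r.init_sat
  obtain ⟨p, hp0, hp⟩ := exists_seq_of_forall_exists (a := [m])
    (P := fun t => t ∈ r.tree ∧ t ≠ [])
    (R := fun t t' => (∃ m, t' = t ++ [m]) ∧ ∃ d, r.cnt t' = r.cnt t + Pi.single d 1 ∧
      (A.trans (r.label t) (w d (r.cnt t d)) d).Sat {r.label t'}) ⟨hm, by simp⟩ <| by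
    rintro t ⟨ht, hne⟩
    obtain ⟨d, hc, hs⟩ := r.step t ht hne
    obtain ⟨_, ⟨m, hm, rfl⟩, hq⟩ := (hA.2 _ _ _).exists_sat_singleton hs
    exact ⟨t ++ [m], ⟨hm, by simp⟩, ⟨m, rfl⟩, d,
      by rw [hc m hm, update_add_one_eq_add_single], hq⟩
  have hpath : r.IsPath (fun k => k.casesOn [] p) := by
    refine ⟨rfl, fun i => ⟨?_, (hp i).1.1⟩⟩
    cases i with
    | zero => exact ⟨m, hp0⟩
    | succ i => exact (hp i).2.1
  exact ⟨fun k => r.label (p k), fun k => r.cnt (p k), by simpa only [hp0] using hinit,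
    by simp only [hp0, r.cnt_init [m] hm le_rfl], fun k => (hp k).2.2,
    (parityCondition_add _ 1).2 (hr _ hpath)⟩

theorem IsNondet.mem_lang_iff (hA : A.IsNondet) :
    w ∈ A.lang ↔ ∃ q c, A.init.Sat {q 0} ∧ A.IsAcceptingBranch w q c :=
  ⟨hA.exists_isAcceptingBranch, fun ⟨q, c, hinit, h⟩ =>
    mem_lang_of_forall_exists_isAcceptingBranch (Set.countable_singleton _)
      (Set.singleton_nonempty _) hinit fun _ hs => ⟨q, c, hs.symm, h⟩⟩

namespace IsAcceptingBranch

variable {q : ℕ → Q} {c : ℕ → Fin n → ℕ}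

theorem monotone (h : A.IsAcceptingBranch w q c) : Monotone c :=
  monotone_nat_of_le_succ fun k => by
    obtain ⟨d, hd, -⟩ := h.step k
    exact hd ▸ le_self_add

theorem sum_eq (h : A.IsAcceptingBranch w q c) (k : ℕ) : ∑ d, c k d = k := by
  induction k with
  | zero => simp [h.zero]
  | succ k ih =>
    obtain ⟨d, hd, -⟩ := h.step k
    simp [hd, Finset.sum_add_distrib, ih]

theorem le_index (h : A.IsAcceptingBranch w q c) (k : ℕ) (d : Fin n) : c k d ≤ k :=
  (Finset.single_le_sum (fun _ _ => Nat.zero_le _) (Finset.mem_univ d)).trans_eq (h.sum_eq k)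

theorem pump (h : A.IsAcceptingBranch w q c) {s t : ℕ} (hst : s ≤ t) (hq : q s = q t) :
    ∃ c', A.IsAcceptingBranch (fun d => repeatSegment (w d) (c s d) (c t d))
      (repeatSegment q s t) c' := by
  have hc := h.monotone hst
  let c' : ℕ → Fin n → ℕ := fun k => if k < t then c k else c (k - (t - s)) + (c t - c s)
  have hlow : ∀ k ≤ t, c' k = c k := by
    intro k hk
    rcases hk.lt_or_eq with hk | rfl
    · exact if_pos hk
    · simp only [c', lt_irrefl, if_false, Nat.sub_sub_self hst, add_tsub_cancel_of_le hc]
  have hhigh : ∀ k ≥ s, c' (k + (t - s)) = c k + (c t - c s) := by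
    intro k hk
    simp only [c', if_neg (show ¬ k + (t - s) < t by lia), Nat.add_sub_cancel]
  refine ⟨c', (hlow 0 (Nat.zero_le t)).trans h.zero, fun k => ?_, ?_⟩
  · rcases lt_or_ge k t with hk | hk
    · obtain ⟨d, hd, hs⟩ := h.step k
      have hlt : c k d < c t d := by
        have := h.monotone (Nat.succ_le_of_lt hk) d
        simp only [Nat.succ_eq_add_one, hd, Pi.add_apply, Pi.single_eq_same] at this
        exact this
      refine ⟨d, by rw [hlow _ hk, hlow _ hk.le, hd], ?_⟩
      rwa [repeatSegment_of_le hst hq hk, repeatSegment_of_lt hk, hlow _ hk.le,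
        repeatSegment_of_lt hlt]
    · obtain ⟨j, hj, rfl⟩ : ∃ j ≥ s, k = j + (t - s) := ⟨k - (t - s), by lia, by lia⟩
      obtain ⟨d, hd, hs⟩ := h.step j
      rw [add_right_comm]
      refine ⟨d, by rw [hhigh _ (by lia), hhigh _ hj, hd, add_right_comm], ?_⟩
      rwa [repeatSegment_add (by lia), repeatSegment_add hj, hhigh _ hj, Pi.add_apply,
        Pi.sub_apply, repeatSegment_add (h.monotone hj d)]
  · simp only [apply_repeatSegment A.prio]
    exact (parityCondition_repeatSegment _ s t).2 h.parity

end IsAcceptingBranch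

theorem IsNondet.exists_repeatSegment_mem_lang [Finite Q] (hA : A.IsNondet) (hw : w ∈ A.lang) :
    ∃ a b : Fin n → ℕ, a < b ∧ (∀ d, b d ≤ Nat.card Q) ∧
      (fun d => repeatSegment (w d) (a d) (b d)) ∈ A.lang := by
  obtain ⟨q, c, hinit, h⟩ := hA.mem_lang_iff.1 hw
  obtain ⟨s, t, hst, ht, hq⟩ := exists_lt_le_card_map_eq q
  obtain ⟨c', hpump⟩ := h.pump hst.le hq
  have hne : c s ≠ c t := fun heq => hst.ne <| by rw [← h.sum_eq s, heq, h.sum_eq t]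
  refine ⟨c s, c t, (h.monotone hst.le).lt_of_ne hne, fun d => (h.le_index t d).trans ht, ?_⟩
  refine hA.mem_lang_iff.2 ⟨_, c', ?_, hpump⟩
  rwa [repeatSegment_of_lt (Nat.zero_lt_of_lt hst)]

end AAPA

/-! ### The language of the block automaton -/

/-- States of `blockAutomaton`: `skip` is passing through the first block `0ᵏ1` of the second
word, `read` is about to read the first word, and `expect b` is waiting for the letter `b` in the
second word. -/
inductive BlockState
  | skip
  | read
  | expect (b : Bool)

instance : Fintype BlockState where
  elems := ⟨([.skip, .read, .expect false, .expect true] : List BlockState), by simp⟩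
  complete := by rintro (_ | _ | _ | _) <;> simp

/-- The automaton over `{0, 1}` (encoded as `Bool`) which checks that both words are equal, and
that deleting the first block `0ᵏ1` of the second word, if there is one, gives the first word. -/
def blockAutomaton : AAPA Bool BlockState 2 where
  init := .and (.var .skip) (.var .read)
  trans
    | .skip, false, 1 => .var .skip
    | .skip, true, 1 => .var .read
    | .read, b, 0 => .var (.expect b)
    | .expect false, false, 1 => .var .read
    | .expect true, true, 1 => .var .read
    | _, _, _ => .ff
  prio _ := 0

/-- What `blockAutomaton` in a given state, with counters `c`, checks about the remaining parts
of the words `w`. -/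
def BlockState.Spec (w : Fin 2 → ℕ → Bool) : BlockState → (Fin 2 → ℕ) → Prop
  | skip, c => ∀ k, w 1 (c 1 + k) = true → (∀ j < k, w 1 (c 1 + j) = false) →
      ∀ i, w 0 (c 0 + i) = w 1 (c 1 + k + 1 + i)
  | read, c => ∀ i, w 0 (c 0 + i) = w 1 (c 1 + i)
  | expect b, c => w 1 (c 1) = b ∧ ∀ i, w 0 (c 0 + i) = w 1 (c 1 + 1 + i)

namespace blockAutomaton

open BlockState

variable {w : Fin 2 → ℕ → Bool}

section Visits

variable {r : blockAutomaton.Run w} {c : Fin 2 → ℕ}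

theorem visits_of_visits_skip (h : r.Visits skip c) :
    r.Visits (if w 1 (c 1) then read else skip) (c + Pi.single 1 1) := by
  obtain ⟨d, hd⟩ := h.exists_sat
  fin_cases d
  · cases hb : w 0 (c 0) <;> simp [hb, blockAutomaton, PosBool.Sat] at hd
  · cases hb : w 1 (c 1) <;> simpa [hb, blockAutomaton, PosBool.Sat] using hd

theorem visits_of_visits_read (h : r.Visits read c) :
    r.Visits (expect (w 0 (c 0))) (c + Pi.single 0 1) := by
  obtain ⟨d, hd⟩ := h.exists_sat
  fin_cases d
  · simpa [blockAutomaton, PosBool.Sat] using hd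
  · simp [blockAutomaton, PosBool.Sat] at hd

theorem visits_of_visits_expect {b : Bool} (h : r.Visits (expect b) c) :
    w 1 (c 1) = b ∧ r.Visits read (c + Pi.single 1 1) := by
  obtain ⟨d, hd⟩ := h.exists_sat
  fin_cases d
  · cases b <;> simp [blockAutomaton, PosBool.Sat] at hd
  · cases b <;> cases hb : w 1 (c 1) <;> simp_all [blockAutomaton, PosBool.Sat]

theorem spec_of_visits_read (h : r.Visits read c) : Spec w read c := by
  intro i
  have hexpect := visits_of_visits_expect (visits_of_visits_read h)
  induction i generalizing c with
  | zero => simpa using hexpect.1.symm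
  | succ i ih =>
    have := ih hexpect.2 (visits_of_visits_expect (visits_of_visits_read hexpect.2))
    simpa [add_assoc, add_comm 1 i] using this

theorem spec_of_visits_skip (h : r.Visits skip c) : Spec w skip c := by
  intro k hone hzero i
  have hnext := visits_of_visits_skip h
  induction k generalizing c with
  | zero =>
    rw [show w 1 (c 1) = true from hone, if_pos rfl] at hnext
    simpa using spec_of_visits_read hnext i
  | succ k ih =>
    rw [show w 1 (c 1) = false from hzero 0 k.succ_pos] at hnext
    have := ih hnext (by simpa [add_assoc, add_comm 1 k] using hone)
      (fun j hj => by simpa [add_assoc, add_comm 1 j] using hzero (j + 1) (by lia))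
      (visits_of_visits_skip hnext)
    simpa [add_assoc, add_left_comm 1 k] using this

end Visits

theorem exists_spec_of_spec (q : BlockState) (c : Fin 2 → ℕ) (h : Spec w q c) :
    ∃ d q', (blockAutomaton.trans q (w d (c d)) d).Sat {q'} ∧ Spec w q' (c + Pi.single d 1) := by
  cases q with
  | skip =>
    cases hb : w 1 (c 1) with
    | false =>
      refine ⟨1, skip, by simp [hb, blockAutomaton, PosBool.Sat], fun k hone hzero i => ?_⟩
      have := h (k + 1) (by simpa [add_assoc, add_comm 1 k] using hone) (fun j hj => by
        cases j with
        | zero => exact hb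
        | succ j => simpa [add_assoc, add_comm 1 j] using hzero j (by lia)) i
      simpa [add_assoc, add_left_comm 1 k] using this
    | true =>
      refine ⟨1, read, by simp [hb, blockAutomaton, PosBool.Sat], fun i => ?_⟩
      simpa using h 0 hb (by simp) i
  | read =>
    refine ⟨0, expect (w 0 (c 0)), by simp [blockAutomaton, PosBool.Sat], ?_, fun i => ?_⟩
    · simpa using (h 0).symm
    · simpa [add_assoc, add_comm 1 i] using h (i + 1)
  | expect b =>
    refine ⟨1, read, ?_, fun i => by simpa using h.2 i⟩
    cases b <;> simp [h.1, blockAutomaton, PosBool.Sat]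

theorem mem_lang_iff_spec : w ∈ blockAutomaton.lang ↔ Spec w skip 0 ∧ Spec w read 0 := by
  constructor
  · rintro ⟨r, -⟩
    obtain ⟨hskip, hread⟩ := r.sat_init_visits
    exact ⟨spec_of_visits_skip hskip, spec_of_visits_read hread⟩
  · rintro ⟨hskip, hread⟩
    refine AAPA.mem_lang_of_forall_exists_isAcceptingBranch (S := {skip, read})
      (Set.toFinite _).countable (Set.insert_nonempty _ _) ⟨Or.inl rfl, Or.inr rfl⟩ ?_
    have hbranch : ∀ s, Spec w s 0 → ∃ q c, q 0 = s ∧ blockAutomaton.IsAcceptingBranch w q c :=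
      fun _ hs => AAPA.exists_isAcceptingBranch_of_invariant (fun _ => Even.zero) hs
        exists_spec_of_spec
    rintro s (rfl | rfl)
    exacts [hbranch _ hskip, hbranch _ hread]

theorem mem_lang_iff : w ∈ blockAutomaton.lang ↔ w 0 = w 1 ∧
    ∀ k, w 1 k = true → (∀ j < k, w 1 j = false) → ∀ i, w 0 i = w 1 (k + 1 + i) := by
  simp [mem_lang_iff_spec, Spec, funext_iff, and_comm]

/-- The periodic word `(0ⁿ1)^ω`. -/
def periodicWord (n m : ℕ) : Bool :=
  decide (m % (n + 1) = n)

variable {n m : ℕ}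

theorem periodicWord_of_lt (h : m < n) : periodicWord n m = false := by
  simp [periodicWord, Nat.mod_eq_of_lt (h.trans n.lt_succ_self), h.ne]

theorem periodicWord_self (n : ℕ) : periodicWord n n = true := by
  simp [periodicWord]

theorem periodicWord_add (n m : ℕ) : periodicWord n (n + 1 + m) = periodicWord n m := by
  rw [periodicWord, Nat.add_mod_left, periodicWord]

theorem periodicWord_mem_lang (n : ℕ) : (fun _ => periodicWord n) ∈ blockAutomaton.lang := by
  refine mem_lang_iff.2 ⟨rfl, fun k hone hzero i => ?_⟩
  obtain rfl : k = n := by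
    rcases lt_trichotomy k n with hk | hk | hk
    · simp [periodicWord_of_lt hk] at hone
    · exact hk
    · simpa [periodicWord_self] using hzero n hk
  exact (periodicWord_add k i).symm

theorem repeatSegment_periodicWord_of_lt {a b : ℕ} (hb : b ≤ n) (hm : m < n + (b - a)) :
    repeatSegment (periodicWord n) a b m = false := by
  rw [repeatSegment]
  split_ifs with h
  · exact periodicWord_of_lt (h.trans_le hb)
  · exact periodicWord_of_lt (by lia)

theorem repeatSegment_periodicWord_notMem_lang {a b : Fin 2 → ℕ} (hab : a < b)
    (hb : ∀ d, b d ≤ n) :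
    (fun d => repeatSegment (periodicWord n) (a d) (b d)) ∉ blockAutomaton.lang := by
  intro h
  obtain ⟨heq, hdelete⟩ := mem_lang_iff.1 h
  have ha : a 1 ≤ n := (hab.le 1).trans (hb 1)
  have h0 : repeatSegment (periodicWord n) (a 0) (b 0) n = true := by
    rw [hdelete (n + (b 1 - a 1)) (by rw [repeatSegment_add ha, periodicWord_self])
        (fun j => repeatSegment_periodicWord_of_lt (hb 1)) n,
      show n + (b 1 - a 1) + 1 + n = n + 1 + n + (b 1 - a 1) by lia,
      repeatSegment_add (by lia), periodicWord_add, periodicWord_self]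
  have hone : ∀ d, repeatSegment (periodicWord n) (a d) (b d) n = true :=
    Fin.forall_fin_two.2 ⟨h0, (congrFun heq n).symm.trans h0⟩
  obtain ⟨d, hd⟩ := (Pi.lt_def.1 hab).2
  exact absurd (hone d) (by simp [repeatSegment_periodicWord_of_lt (hb d)
    (show n < n + (b d - a d) by lia)])

theorem lang_ne_of_isNondet {Q : Type*} [Finite Q] {B : AAPA Bool Q 2} (hB : B.IsNondet) :
    B.lang ≠ blockAutomaton.lang := by
  intro hlang
  obtain ⟨a, b, hab, hb, hmem⟩ :=
    hB.exists_repeatSegment_mem_lang (hlang ▸ periodicWord_mem_lang (Nat.card Q))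
  exact repeatSegment_periodicWord_notMem_lang hab hb (hlang ▸ hmem)

end blockAutomaton

/-- There exists an AAPA whose language is recognized by no NAPA:
there are a finite alphabet `σ` and an AAPA `A` over `σ` with two directions such
that `L(B) ≠ L(A)` for every NAPA `B` over `σ` with two directions. -/
theorem aapa_strictly_more_expressive_than_napa :
    ∃ (σ : Type) (_ : Fintype σ) (Q : Type) (_ : Fintype Q) (_ : Nonempty Q)
      (A : AAPA σ Q 2),
      ∀ (Q' : Type) (_ : Fintype Q') (_ : Nonempty Q') (B : AAPA σ Q' 2),
        B.IsNondet → B.lang ≠ A.lang := by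
  exact ⟨Bool, inferInstance, BlockState, inferInstance, ⟨.read⟩, blockAutomaton,
    fun _ _ _ _ hB => blockAutomaton.lang_ne_of_isNondet hB⟩
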